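/- Let N be the group of upper unitriangular 3×3 rational matrices with (1,2)-entry a ∈ ℤ and (2,3)- and (1,3)-entries b, c ∈ ℤ[1/2]. The map φ₂ sending the matrix with parameters (a,b,c) to the matrix with parameters (2a, b, 2c) is a well-defined injective group endomorphism of N which is not surjective, and φ₂ restricts to a bijection of the central subgroup Z = {matrices with parameters (0,0,c), c ∈ ℤ[1/2]} onto itself; in particular φ₂ induces an automorphism of the centre of N but is not an automorphism of N. -/

import Mathlib

/-- `x ∈ ℤ[1/2]`, i.e. `x = m / 2^k` for some integer `m` and natural number `k`. -/
def IsDyadic (x : ℚ) : Prop := ∃ (m : ℤ) (k : ℕ), x = (m : ℚ) / 2 ^ k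

lemma IsDyadic.add {x y : ℚ} (hx : IsDyadic x) (hy : IsDyadic y) : IsDyadic (x + y) := by
  obtain ⟨m, k, rfl⟩ := hx
  obtain ⟨m', k', rfl⟩ := hy
  have h1 : ((2 : ℚ) ^ k) ≠ 0 := by positivity
  have h2 : ((2 : ℚ) ^ k') ≠ 0 := by positivity
  refine ⟨m * 2 ^ k' + m' * 2 ^ k, k + k', ?_⟩
  rw [div_add_div _ _ h1 h2, pow_add]
  push_cast
  ring_nf

lemma IsDyadic.neg {x : ℚ} (hx : IsDyadic x) : IsDyadic (-x) := by
  obtain ⟨m, k, rfl⟩ := hx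
  exact ⟨-m, k, by push_cast; ring⟩

lemma IsDyadic.intMul (m : ℤ) {x : ℚ} (hx : IsDyadic x) : IsDyadic ((m : ℚ) * x) := by
  obtain ⟨m', k, rfl⟩ := hx
  exact ⟨m * m', k, by push_cast; ring⟩

lemma IsDyadic.sub {x y : ℚ} (hx : IsDyadic x) (hy : IsDyadic y) : IsDyadic (x - y) := by
  simpa [sub_eq_add_neg] using hx.add hy.neg

/-- The upper unitriangular `3 × 3` rational matrix with parameters `(a, b, c)`:
rows `(1, a, c)`, `(0, 1, b)`, `(0, 0, 1)`. -/
def uni (a b c : ℚ) : Matrix (Fin 3) (Fin 3) ℚ := !![1, a, c; 0, 1, b; 0, 0, 1]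

lemma uni_mul (a b c a' b' c' : ℚ) :
    uni a b c * uni a' b' c' = uni (a + a') (b + b') (c + c' + a * b') := by
  ext i j
  fin_cases i <;> fin_cases j <;>
    simp [uni, Matrix.mul_fin_three] <;> ring

lemma uni_one : uni 0 0 0 = 1 := by
  ext i j
  fin_cases i <;> fin_cases j <;> simp [uni, Matrix.one_apply, Matrix.vecHead, Matrix.vecTail]

lemma uni_mul_inv (a b c : ℚ) : uni a b c * uni (-a) (-b) (a * b - c) = 1 := by
  rw [uni_mul, show a + -a = (0:ℚ) by ring, show b + -b = (0:ℚ) by ring,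
    show c + (a * b - c) + a * -b = (0:ℚ) by ring, uni_one]

lemma uni_inv_mul (a b c : ℚ) : uni (-a) (-b) (a * b - c) * uni a b c = 1 := by
  rw [uni_mul, show -a + a = (0:ℚ) by ring, show -b + b = (0:ℚ) by ring,
    show a * b - c + c + -a * b = (0:ℚ) by ring, uni_one]

/-- The unitriangular matrix with parameters `(a,b,c)` as an element of `GL₃(ℚ)`. -/
def uniUnit (a b c : ℚ) : Matrix.GeneralLinearGroup (Fin 3) ℚ :=
  ⟨uni a b c, uni (-a) (-b) (a * b - c), uni_mul_inv a b c, uni_inv_mul a b c⟩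

/-- The group `N` of upper unitriangular `3 × 3` rational matrices with `(1,2)`-entry in
`ℤ` and `(2,3)`- and `(1,3)`-entries in `ℤ[1/2]`, as a subgroup of `GL₃(ℚ)`. -/
def heisenbergN : Subgroup (Matrix.GeneralLinearGroup (Fin 3) ℚ) where
  carrier := {M | ∃ (a : ℤ) (b c : ℚ), IsDyadic b ∧ IsDyadic c ∧
    (M : Matrix (Fin 3) (Fin 3) ℚ) = uni (a : ℚ) b c}
  one_mem' := ⟨0, 0, 0, ⟨0, 0, by norm_num⟩, ⟨0, 0, by norm_num⟩, by
    push_cast; exact uni_one.symm⟩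
  mul_mem' := by
    rintro M M' ⟨a, b, c, hb, hc, hM⟩ ⟨a', b', c', hb', hc', hM'⟩
    refine ⟨a + a', b + b', c + c' + (a : ℚ) * b', hb.add hb',
      (hc.add hc').add (IsDyadic.intMul a hb'), ?_⟩
    push_cast
    rw [hM, hM', uni_mul]
  inv_mem' := by
    rintro M ⟨a, b, c, hb, hc, hM⟩
    refine ⟨-a, -b, (a : ℚ) * b - c, hb.neg, (IsDyadic.intMul a hb).sub hc, ?_⟩
    push_cast
    rw [hM, Matrix.inv_eq_right_inv (uni_mul_inv (a : ℚ) b c)]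

/-!
Conjugation by `diag(k, 1, 1)` sends the matrix with parameters `(a, b, c)` to the one with
parameters `(k a, b, k c)`. For `k` a nonzero integer it maps `N` into itself, so `φ₂`, the case
`k = 2`, is the restriction to `N` of an inner automorphism of `GL₃(ℚ)`; hence it is an injective
homomorphism. Surjectivity is then a matter of dividing by `2`, which is possible for the dyadic
parameter `c` but not for the integer parameter `a`.
-/

lemma isDyadic_zero : IsDyadic 0 := ⟨0, 0, by simp⟩

lemma isDyadic_inv_two : IsDyadic 2⁻¹ := ⟨1, 1, by simp⟩

lemma IsDyadic.mul {x y : ℚ} (hx : IsDyadic x) (hy : IsDyadic y) : IsDyadic (x * y) := by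
  obtain ⟨m, k, rfl⟩ := hx
  obtain ⟨n, l, rfl⟩ := hy
  exact ⟨m * n, k + l, by rw [div_mul_div_comm, Int.cast_mul, pow_add]⟩

lemma uni_inj {a b c a' b' c' : ℚ} :
    uni a b c = uni a' b' c' ↔ a = a' ∧ b = b' ∧ c = c' := by
  refine ⟨fun h => ⟨congrFun₂ h 0 1, congrFun₂ h 1 2, congrFun₂ h 0 2⟩, ?_⟩
  rintro ⟨rfl, rfl, rfl⟩
  rfl

lemma diagonal_mul_uni (r a b c : ℚ) :
    Matrix.diagonal ![r, 1, 1] * uni a b c =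
      uni (r * a) b (r * c) * Matrix.diagonal ![r, 1, 1] := by
  ext i j
  fin_cases i <;> fin_cases j <;> simp [uni, Matrix.diagonal_mul, Matrix.mul_diagonal]

/-- The matrix `diag(r, 1, 1)` as an element of `GL₃(ℚ)`, whose conjugation action scales the
parameters `a` and `c` by `r`. -/
def diagUnit (r : ℚˣ) : Matrix.GeneralLinearGroup (Fin 3) ℚ :=
  Units.map (Matrix.diagonalRingHom (Fin 3) ℚ).toMonoidHom (MulEquiv.piUnits.symm ![r, 1, 1])

lemma coe_diagUnit (r : ℚˣ) :
    (diagUnit r : Matrix (Fin 3) (Fin 3) ℚ) = Matrix.diagonal ![(r : ℚ), 1, 1] := by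
  ext i j
  fin_cases i <;> fin_cases j <;> rfl

lemma conj_diagUnit_eq_uni (r : ℚˣ) {g : Matrix.GeneralLinearGroup (Fin 3) ℚ} {a b c : ℚ}
    (hg : (g : Matrix (Fin 3) (Fin 3) ℚ) = uni a b c) :
    (MulAut.conj (diagUnit r) g : Matrix (Fin 3) (Fin 3) ℚ) = uni (r * a) b (r * c) := by
  rw [MulAut.conj_apply, Units.val_mul, Units.mul_inv_eq_iff_eq_mul, Units.val_mul, hg,
    coe_diagUnit, diagonal_mul_uni]

namespace heisenbergN

@[ext]
lemma ext {g h : heisenbergN} (hgh : g.val.val = h.val.val) : g = h :=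
  Subtype.ext (Units.ext hgh)

/-- The element of `N` with parameters `(a, b, c)`. -/
def ofParams (a : ℤ) {b c : ℚ} (hb : IsDyadic b) (hc : IsDyadic c) : heisenbergN :=
  ⟨uniUnit a b c, a, b, c, hb, hc, rfl⟩

lemma coe_ofParams (a : ℤ) {b c : ℚ} (hb : IsDyadic b) (hc : IsDyadic c) :
    (ofParams a hb hc).val.val = uni a b c := rfl

/-- The central subgroup `Z` of `N`, as the set of elements with parameters `(0, 0, c)`,
`c ∈ ℤ[1/2]`. -/
def centralSet : Set heisenbergN := {g | ∃ c, IsDyadic c ∧ g.val.val = uni 0 0 c}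

section scaleHom

variable (k : ℤ) [NeZero k]

lemma conj_diagUnit_mem (g : heisenbergN) :
    MulAut.conj (diagUnit (Units.mk0 (k : ℚ) (Int.cast_ne_zero.2 (NeZero.ne k)))) g ∈
      heisenbergN := by
  obtain ⟨a, b, c, hb, hc, hg⟩ := g.2
  refine ⟨k * a, b, k * c, hb, hc.intMul k, ?_⟩
  rw [conj_diagUnit_eq_uni _ hg, Units.val_mk0, Int.cast_mul]

/-- The endomorphism `φₖ` of `N` sending parameters `(a, b, c)` to `(k a, b, k c)`, obtained by
restricting conjugation by `diag(k, 1, 1)`. -/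
def scaleHom : heisenbergN →* heisenbergN :=
  ((MulAut.conj (diagUnit (Units.mk0 (k : ℚ) (Int.cast_ne_zero.2 (NeZero.ne k))))).toMonoidHom.comp
    heisenbergN.subtype).codRestrict heisenbergN (conj_diagUnit_mem k)

lemma coe_scaleHom {g : heisenbergN} {a b c : ℚ} (hg : g.val.val = uni a b c) :
    (scaleHom k g).val.val = uni (k * a) b (k * c) :=
  conj_diagUnit_eq_uni _ hg

lemma scaleHom_injective : Function.Injective (scaleHom k) :=
  (MonoidHom.injective_codRestrict ..).2 <|
    (MulAut.conj _).injective.comp heisenbergN.subtype_injective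

lemma mapsTo_scaleHom_centralSet : Set.MapsTo (scaleHom k) centralSet centralSet := by
  rintro g ⟨c, hc, hg⟩
  exact ⟨k * c, hc.intMul k, by rw [coe_scaleHom k hg, mul_zero]⟩

variable {k}

lemma isUnit_of_scaleHom_surjective (h : Function.Surjective (scaleHom k)) : IsUnit k := by
  obtain ⟨g, hg⟩ := h (ofParams 1 isDyadic_zero isDyadic_zero)
  obtain ⟨a, b, c, -, -, hga⟩ := g.2
  have hparams : uni (k * a) b (k * c) = uni (1 : ℤ) 0 0 := by
    rw [← coe_scaleHom k hga, hg, coe_ofParams]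
  exact .of_mul_eq_one a (mod_cast (uni_inj.1 hparams).1)

lemma surjOn_scaleHom_centralSet (hk : IsDyadic (k : ℚ)⁻¹) :
    Set.SurjOn (scaleHom k) centralSet centralSet := by
  rintro g ⟨c, hc, hg⟩
  have hx : (ofParams 0 isDyadic_zero (hk.mul hc)).val.val = uni 0 0 ((k : ℚ)⁻¹ * c) := by
    rw [coe_ofParams, Int.cast_zero]
  refine ⟨_, ⟨_, hk.mul hc, hx⟩, ext ?_⟩
  rw [coe_scaleHom k hx, hg, mul_zero, mul_inv_cancel_left₀ (Int.cast_ne_zero.2 (NeZero.ne k))]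

lemma bijOn_scaleHom_centralSet (hk : IsDyadic (k : ℚ)⁻¹) :
    Set.BijOn (scaleHom k) centralSet centralSet :=
  ⟨mapsTo_scaleHom_centralSet k, (scaleHom_injective k).injOn, surjOn_scaleHom_centralSet hk⟩

end scaleHom

end heisenbergN

/-- The map `φ₂` sending the unitriangular matrix with parameters
`(a, b, c)` to the one with parameters `(2a, b, 2c)` is a well-defined injective group
endomorphism of `N = heisenbergN` which is not surjective, and it restricts to a bijection
of the central subgroup `Z = {matrices with parameters (0,0,c), c ∈ ℤ[1/2]}` onto itself;
in particular `φ₂` induces an automorphism of the centre of `N` but is not an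
automorphism of `N`. -/
theorem phi_two_injective_not_surjective_bijective_on_center :
    ∃ φ : heisenbergN →* heisenbergN,
      (∀ (g : heisenbergN) (a b c : ℚ),
        ((g : Matrix.GeneralLinearGroup (Fin 3) ℚ) : Matrix (Fin 3) (Fin 3) ℚ) =
            uni a b c →
        (((φ g : Matrix.GeneralLinearGroup (Fin 3) ℚ)) : Matrix (Fin 3) (Fin 3) ℚ) =
            uni (2 * a) b (2 * c)) ∧
      Function.Injective φ ∧
      ¬ Function.Surjective φ ∧
      Set.BijOn φ
        {g : heisenbergN | ∃ c : ℚ, IsDyadic c ∧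
          ((g : Matrix.GeneralLinearGroup (Fin 3) ℚ) : Matrix (Fin 3) (Fin 3) ℚ) =
            uni 0 0 c}
        {g : heisenbergN | ∃ c : ℚ, IsDyadic c ∧
          ((g : Matrix.GeneralLinearGroup (Fin 3) ℚ) : Matrix (Fin 3) (Fin 3) ℚ) =
            uni 0 0 c} := by
  refine ⟨heisenbergN.scaleHom 2, fun g a b c hg => ?_, heisenbergN.scaleHom_injective 2,
    fun hsurj => ?_, heisenbergN.bijOn_scaleHom_centralSet ?_⟩
  · simpa only [Int.cast_ofNat] using heisenbergN.coe_scaleHom 2 hg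
  · exact absurd (heisenbergN.isUnit_of_scaleHom_surjective hsurj) (by decide)
  · simpa only [Int.cast_ofNat] using isDyadic_inv_two
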